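/- Let r > 1 and fix j ∈ {1,2}. Assume u_k(·, α_k) ∈ L^∞(ℝ²; ℝ³) is 𝓡_𝓜-periodic and v_{(α₁,α₂)} ∈ L^∞_{2r}(ℝ² × [−L_u^z, L_u^z]) for all α_k ∈ 𝓐_k. Then the generalized interlayer site potential Ψ_j[u] belongs to L¹(Γ_𝓜 × Γ_{3−j}). -/

import Mathlib

open scoped Real BigOperators
open MeasureTheory Filter Topology Matrix

noncomputable section

/-- The 2×2 rotation matrix through angle `φ`. -/
def Rot (φ : ℝ) : Matrix (Fin 2) (Fin 2) ℝ :=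
  !![Real.cos φ, -Real.sin φ; Real.sin φ, Real.cos φ]

/-- Euclidean norm on `ℝ²`. -/
def norm2 (v : Fin 2 → ℝ) : ℝ := Real.sqrt (v 0 ^ 2 + v 1 ^ 2)

/-- Euclidean norm on `ℝ³`. -/
def norm3 (v : Fin 3 → ℝ) : ℝ := Real.sqrt (v 0 ^ 2 + v 1 ^ 2 + v 2 ^ 2)

/-- Cast an integer vector to a real vector. -/
def iv (n : Fin 2 → ℤ) : Fin 2 → ℝ := fun i => (n i : ℝ)

/-- The lattice `M ℤ²`. -/
def lat (M : Matrix (Fin 2) (Fin 2) ℝ) : Set (Fin 2 → ℝ) :=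
  {v | ∃ n : Fin 2 → ℤ, v = M.mulVec (iv n)}

/-- The unit cell `M [0,1)²`. -/
def cell (M : Matrix (Fin 2) (Fin 2) ℝ) : Set (Fin 2 → ℝ) :=
  {v | ∃ t : Fin 2 → ℝ, (∀ i, t i ∈ Set.Ico (0 : ℝ) 1) ∧ v = M.mulVec t}

/-- The reciprocal matrix `2π M⁻ᵀ`. -/
def recip (M : Matrix (Fin 2) (Fin 2) ℝ) : Matrix (Fin 2) (Fin 2) ℝ :=
  (2 * π) • (M⁻¹)ᵀ

/-- A pair of lattices with reciprocal-lattice matrices `B1`, `B2` is incommensurate iff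
`G₁ + G₂ = 0` with `G_k` in the respective reciprocal lattice implies `G₁ = G₂ = 0`. -/
def Incommensurate (B1 B2 : Matrix (Fin 2) (Fin 2) ℝ) : Prop :=
  ∀ G1 ∈ lat B1, ∀ G2 ∈ lat B2, G1 + G2 = 0 → G1 = 0 ∧ G2 = 0

/-- Euclidean distance from `v ∈ ℝ²` to the integer lattice `ℤ²`. -/
def distZ2 (v : Fin 2 → ℝ) : ℝ := ⨅ m : Fin 2 → ℤ, norm2 (v - iv m)

/-- `θ` is a `(q,K,σ)`-Diophantine 2D rotation. -/
def IsDiophantine (A : Matrix (Fin 2) (Fin 2) ℝ) (q K σ θ : ℝ) : Prop :=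
  ∀ n : Fin 2 → ℤ, n ≠ 0 →
    K / norm2 (iv n) ^ (2 * σ) ≤ distZ2 ((q • (Aᵀ * Rot θ * (A⁻¹)ᵀ)).mulVec (iv n)) ∧
    K / norm2 (iv n) ^ (2 * σ) ≤ distZ2 ((q⁻¹ • (Aᵀ * Rot (-θ) * (A⁻¹)ᵀ)).mulVec (iv n))

/-- The moiré length scale ratio `ρ_𝓜`. -/
def rhoM (q θ : ℝ) : ℝ :=
  (Real.sqrt ((Real.sqrt q - (Real.sqrt q)⁻¹) ^ 2 + 4 * Real.sin (θ / 2) ^ 2))⁻¹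

/-- Riemann zeta function (for real `s > 1`, via its Dirichlet series). -/
def zetaR (s : ℝ) : ℝ := ∑' n : ℕ, ((n : ℝ) + 1) ^ (-s)

/-- Operator (spectral) norm of a 2×2 real matrix w.r.t. the Euclidean norm. -/
def opNorm2 (M : Matrix (Fin 2) (Fin 2) ℝ) : ℝ :=
  ⨆ x : {x : Fin 2 → ℝ // norm2 x ≤ 1}, norm2 (M.mulVec x.1)

/-- Embedding `ℝ² ↪ ℝ³`, `x ↦ (x, 0)`. -/
def emb (x : Fin 2 → ℝ) : Fin 3 → ℝ := ![x 0, x 1, 0]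

/-- Japanese bracket `⟨x⟩ = (1 + |x|²)^{1/2}` on `ℝ³`. -/
def jap3 (x : Fin 3 → ℝ) : ℝ := Real.sqrt (1 + norm3 x ^ 2)

/-- The region `ℝ² × [−L, L] ⊆ ℝ³`. -/
def slab (L : ℝ) : Set (Fin 3 → ℝ) := {x | x 2 ∈ Set.Icc (-L) L}

/-- Euclidean inner product on `ℝ²`. -/
def dot2 (a b : Fin 2 → ℝ) : ℝ := ∑ i, a i * b i

/-- The index box `⟦−N, N⟧²`. -/
def box (N : ℕ) : Finset (Fin 2 → ℤ) :=
  Finset.Icc (fun _ => -(N : ℤ)) (fun _ => (N : ℤ))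

/-- The normalized Dirichlet kernel `Δ_N^j` of the lattice `A_j ℤ²`. -/
def Dir (Aj : Matrix (Fin 2) (Fin 2) ℝ) (N : ℕ) (G : Fin 2 → ℝ) : ℂ :=
  (((2 * N + 1 : ℝ)) ^ 2)⁻¹ •
    ∑ n ∈ box N, Complex.exp (Complex.I * (dot2 G (Aj.mulVec (iv n)) : ℝ))

/-- The sublattice-averaged interlayer site potential `Ψ_j[u](x,y)` for pair potentials,
with layer `a` playing the role of layer `j` and layer `b` that of layer `3−j`. -/
def PsiPair {𝓐a 𝓐b : Type} [Fintype 𝓐a] [Fintype 𝓐b]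
    (Aa Ab : Matrix (Fin 2) (Fin 2) ℝ)
    (w : 𝓐a → 𝓐b → (Fin 3 → ℝ) → ℝ)
    (τa : 𝓐a → Fin 2 → ℝ) (τb : 𝓐b → Fin 2 → ℝ)
    (ua : (Fin 2 → ℝ) → 𝓐a → Fin 3 → ℝ) (ub : (Fin 2 → ℝ) → 𝓐b → Fin 3 → ℝ)
    (x y : Fin 2 → ℝ) : ℝ :=
  (2 * |Aa.det|)⁻¹ *
    ∑ αa : 𝓐a, ∑ αb : 𝓐b, ∑' n : Fin 2 → ℤ,
      w αa αb (emb y - emb (Ab.mulVec (iv n)) + emb (τa αa) - emb (τb αb) +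
        ua x αa - ub (x - y + Ab.mulVec (iv n)) αb)

/-!
The relaxed relative position of a site over `y` and a site over the lattice point `R` is
`p - R`, where `p` stays bounded as long as `y` does. Peetre's inequality
`1 + |R| ≤ (1 + |p|) (1 + |p - R|)` therefore turns the decay of the pair potential into decay in
`R`, uniformly in `x` and in `y ∈ Γ_{3−j}`. As `2r` exceeds the rank `2` of the lattice, the
lattice sum converges absolutely and uniformly, so it is bounded and measurable on a set of finite
measure.
-/

lemma one_add_norm_le_one_add_norm_add_mul {E : Type*} [SeminormedAddCommGroup E] (a b : E) :
    1 + ‖a‖ ≤ (1 + ‖b + a‖) * (1 + ‖b‖) := by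
  have triangle : ‖a‖ ≤ ‖b + a‖ + ‖b‖ := by simpa using norm_sub_le (b + a) b
  nlinarith [norm_nonneg (b + a), norm_nonneg b]

section LatticeSums

variable {E : Type*} [NormedAddCommGroup E] [NormedSpace ℝ E]

lemma summable_one_add_norm_rpow_neg [FiniteDimensional ℝ E] (L : Submodule ℤ E)
    [DiscreteTopology L] {s : ℝ} (hs : Module.finrank ℤ L < s) :
    Summable fun z : L => (1 + ‖z‖) ^ (-s) := by
  refine (ZLattice.summable_norm_rpow L (-s) (neg_lt_neg hs)).of_norm_bounded_eventually ?_
  -- At `z = 0` the comparison fails, since `0 ^ (-s) = 0`.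
  filter_upwards [(Set.finite_singleton (0 : L)).compl_mem_cofinite] with z hz
  rw [Real.norm_of_nonneg (by positivity)]
  have norm_pos : 0 < ‖z‖ := norm_pos_iff.2 hz
  have s_nonneg : 0 ≤ s := (Nat.cast_nonneg _).trans hs.le
  exact Real.rpow_le_rpow_of_nonpos norm_pos (by linarith) (neg_nonpos.2 s_nonneg)

variable {ι : Type*} [Fintype ι]

lemma summable_one_add_norm_sum_smul_rpow_neg (b : Module.Basis ι ℝ E) {s : ℝ}
    (hs : Fintype.card ι < s) :
    Summable fun n : ι → ℤ => (1 + ‖∑ i, (n i : ℝ) • b i‖) ^ (-s) := by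
  have := b.finiteDimensional_of_finite
  let bℤ := b.restrictScalars ℤ
  have hrank : Module.finrank ℤ (Submodule.span ℤ (Set.range b)) < s := by
    rwa [Module.finrank_eq_card_basis bℤ]
  refine ((summable_one_add_norm_rpow_neg _ hrank).comp_injective
    bℤ.equivFun.symm.injective).congr fun n => ?_
  simp [bℤ, Module.Basis.equivFun_symm_apply, Int.cast_smul_eq_zsmul]

lemma summable_one_add_norm_mulVec_rpow_neg [DecidableEq ι] {M : Matrix ι ι ℝ}
    (hM : IsUnit M.det) {s : ℝ} (hs : Fintype.card ι < s) :
    Summable fun n : ι → ℤ => (1 + ‖M *ᵥ fun i => (n i : ℝ)‖) ^ (-s) := by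
  let columns := (Pi.basisFun ℝ ι).map (M.toLinearEquiv' (M.invertibleOfIsUnitDet hM))
  have columns_eq (i : ι) : columns i = Mᵀ i := by
    rw [Module.Basis.map_apply, Pi.basisFun_apply]
    exact M.mulVec_single_one i
  simpa only [columns_eq, Matrix.mulVec_eq_sum, op_smul_eq_smul] using
    summable_one_add_norm_sum_smul_rpow_neg columns hs

end LatticeSums

lemma integrableOn_tsum_of_summable_bound {α ι F : Type*} [MeasurableSpace α] [Countable ι]
    [NormedAddCommGroup F] [CompleteSpace F] {μ : Measure α} {S : Set α} (hS : μ S ≠ ⊤)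
    {f : ι → α → F} (hf : ∀ i, AEStronglyMeasurable (f i) (μ.restrict S)) {g : ι → ℝ}
    (hg : Summable g) (hfg : ∀ i, ∀ᵐ x ∂μ.restrict S, ‖f i x‖ ≤ g i) :
    IntegrableOn (fun x => ∑' i, f i x) S μ := by
  refine ⟨.tsum hf, .restrict_of_bounded (C := ∑' i, g i) hS.lt_top ?_⟩
  filter_upwards [ae_all_iff.2 hfg] with x hx using tsum_of_norm_bounded hg.hasSum hx

lemma le_mul_rpow_neg_of_rpow_mul_le {J K a t C s : ℝ} (hs : 0 ≤ s) (hJ : 0 ≤ J) (hK : 0 ≤ K)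
    (ha : 0 < a) (ht : 0 ≤ t) (haJ : a ≤ K * J) (h : J ^ s * t ≤ C) :
    t ≤ K ^ s * C * a ^ (-s) := by
  rw [Real.rpow_neg ha.le, ← div_eq_mul_inv, le_div_iff₀ (by positivity)]
  calc t * a ^ s ≤ t * (K * J) ^ s := by gcongr
    _ = K ^ s * (J ^ s * t) := by rw [Real.mul_rpow hK hJ]; ring
    _ ≤ K ^ s * C := by gcongr

lemma abs_le_iSup_iSup_abs {X ι : Type*} {f : X → ι → ℝ} {C : ℝ} (hf : ∀ x i, |f x i| ≤ C)
    (x : X) (i : ι) : |f x i| ≤ ⨆ x, ⨆ i, |f x i| := by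
  refine le_ciSup₂ (f := fun x i => |f x i|) ⟨C, ?_⟩ x i
  rintro _ ⟨_, ⟨x', rfl⟩, ⟨i', rfl⟩⟩
  exact hf x' i'

lemma abs_sub_le_iSup_add_iSup {X Y ι κ : Type*} {f : X → ι → ℝ} {g : Y → κ → ℝ} {Cf Cg : ℝ}
    (hf : ∀ x i, |f x i| ≤ Cf) (hg : ∀ y j, |g y j| ≤ Cg) (x : X) (i : ι) (y : Y) (j : κ) :
    |f x i - g y j| ≤ (⨆ x, ⨆ i, |f x i|) + ⨆ y, ⨆ j, |g y j| :=
  (abs_sub _ _).trans (add_le_add (abs_le_iSup_iSup_abs hf x i) (abs_le_iSup_iSup_abs hg y j))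

lemma norm_le_norm3 (z : Fin 3 → ℝ) : ‖z‖ ≤ norm3 z := by
  have norm3_eq : norm3 z = ‖WithLp.toLp 2 z‖ := by
    simp [norm3, EuclideanSpace.norm_eq, Fin.sum_univ_three]
  rw [norm3_eq, pi_norm_le_iff_of_nonneg (norm_nonneg _)]
  exact PiLp.norm_apply_le (WithLp.toLp 2 z)

lemma one_add_norm_le_sqrt_two_mul_jap3 (z : Fin 3 → ℝ) : 1 + ‖z‖ ≤ √2 * jap3 z := by
  have h := one_add_norm_le_sqrt_two_mul_sqrt (norm3 z)
  rw [Real.norm_of_nonneg (show 0 ≤ norm3 z from Real.sqrt_nonneg _)] at h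
  exact (add_le_add_right (norm_le_norm3 z) 1).trans h

lemma norm_emb (x : Fin 2 → ℝ) : ‖emb x‖ = ‖x‖ := by
  simp [emb, Pi.norm_def, Fin.univ_succ]

lemma emb_apply_two (x : Fin 2 → ℝ) : emb x 2 = 0 := rfl

lemma measurable_emb : Measurable emb := by
  unfold emb
  fun_prop

lemma isBounded_cell (M : Matrix (Fin 2) (Fin 2) ℝ) : Bornology.IsBounded (cell M) := by
  have compact_image : IsCompact ((fun t => M *ᵥ t) '' Set.Icc (0 : Fin 2 → ℝ) 1) :=
    isCompact_Icc.image (by fun_prop)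
  refine compact_image.isBounded.subset ?_
  rintro _ ⟨t, ht, rfl⟩
  exact ⟨t, ⟨fun i => (ht i).1, fun i => (ht i).2.le⟩, rfl⟩

lemma det_Rot (φ : ℝ) : (Rot φ).det = 1 := by
  simp [Rot, Matrix.det_fin_two, ← sq]

lemma isUnit_det_smul_Rot_mul {c : ℝ} (hc : c ≠ 0) (φ : ℝ) {A : Matrix (Fin 2) (Fin 2) ℝ}
    (hA : IsUnit A.det) : IsUnit (c • (Rot φ * A)).det := by
  simpa [Matrix.det_smul, det_Rot, hc] using hA

/-- The argument of the pair potential in `PsiPair`: the relaxed position of the site of layer `a`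
with shift `τa` over `y`, relative to the site of layer `b` with shift `τb` over the lattice point
`R`; the displacement `ua` is evaluated at `x`. -/
def relativePosition (τa τb : Fin 2 → ℝ) (ua ub : (Fin 2 → ℝ) → Fin 3 → ℝ)
    (R x y : Fin 2 → ℝ) : Fin 3 → ℝ :=
  emb y - emb R + emb τa - emb τb + ua x - ub (x - y + R)

namespace relativePosition

variable {τa τb : Fin 2 → ℝ} {ua ub : (Fin 2 → ℝ) → Fin 3 → ℝ}

lemma measurable (hua : Measurable ua) (hub : Measurable ub) (R : Fin 2 → ℝ) :
    Measurable fun p : (Fin 2 → ℝ) × (Fin 2 → ℝ) => relativePosition τa τb ua ub R p.1 p.2 := by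
  have := measurable_emb
  unfold relativePosition
  fun_prop

lemma apply_two (R x y : Fin 2 → ℝ) :
    relativePosition τa τb ua ub R x y 2 = ua x 2 - ub (x - y + R) 2 := by
  simp only [relativePosition, Pi.sub_apply, Pi.add_apply, emb_apply_two]
  ring

lemma mem_slab {L : ℝ} (hL : ∀ x x', |ua x 2 - ub x' 2| ≤ L) (R x y : Fin 2 → ℝ) :
    relativePosition τa τb ua ub R x y ∈ slab L := by
  change _ ∈ Set.Icc (-L) L
  rw [apply_two]
  exact abs_le.1 (hL _ _)

lemma norm_add_emb_le {Ca Cb : ℝ} (hua : ∀ x, ‖ua x‖ ≤ Ca) (hub : ∀ x, ‖ub x‖ ≤ Cb)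
    (R x y : Fin 2 → ℝ) :
    ‖relativePosition τa τb ua ub R x y + emb R‖ ≤ ‖y‖ + ‖τa‖ + ‖τb‖ + Ca + Cb := by
  have emb_R_cancels : relativePosition τa τb ua ub R x y + emb R =
      emb y + emb τa - emb τb + ua x - ub (x - y + R) := by
    unfold relativePosition
    abel
  rw [emb_R_cancels, ← norm_emb y, ← norm_emb τa, ← norm_emb τb]
  refine (norm_sub_le _ _).trans (add_le_add ?_ (hub _))
  refine (norm_add_le _ _).trans (add_le_add ?_ (hua x))
  exact (norm_sub_le _ _).trans (add_le_add_left (norm_add_le _ _) _)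

lemma one_add_norm_le_mul_jap3 {Ca Cb ρ : ℝ} (hua : ∀ x, ‖ua x‖ ≤ Ca) (hub : ∀ x, ‖ub x‖ ≤ Cb)
    (R x : Fin 2 → ℝ) {y : Fin 2 → ℝ} (hy : ‖y‖ ≤ ρ) :
    1 + ‖R‖ ≤
      (1 + (ρ + ‖τa‖ + ‖τb‖ + Ca + Cb)) * √2 * jap3 (relativePosition τa τb ua ub R x y) := by
  set z := relativePosition τa τb ua ub R x y
  have hz : ‖z + emb R‖ ≤ ρ + ‖τa‖ + ‖τb‖ + Ca + Cb :=
    (norm_add_emb_le hua hub R x y).trans (by gcongr)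
  calc 1 + ‖R‖ = 1 + ‖emb R‖ := by rw [norm_emb]
    _ ≤ (1 + ‖z + emb R‖) * (1 + ‖z‖) := one_add_norm_le_one_add_norm_add_mul _ _
    _ ≤ (1 + (ρ + ‖τa‖ + ‖τb‖ + Ca + Cb)) * (√2 * jap3 z) := by
        have bound_nonneg := (norm_nonneg _).trans hz
        exact mul_le_mul (by linarith) (one_add_norm_le_sqrt_two_mul_jap3 z) (by positivity)
          (by linarith)
    _ = _ := (mul_assoc _ _ _).symm

variable {M : Matrix (Fin 2) (Fin 2) ℝ} {w : (Fin 3 → ℝ) → ℝ} {s L C Ca Cb : ℝ}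

lemma exists_summable_bound (hM : IsUnit M.det) (hs : 2 < s)
    (hw : ∀ z ∈ slab L, jap3 z ^ s * |w z| ≤ C) (hL : ∀ x x', |ua x 2 - ub x' 2| ≤ L)
    (hua : ∀ x, ‖ua x‖ ≤ Ca) (hub : ∀ x, ‖ub x‖ ≤ Cb) (τa τb : Fin 2 → ℝ) (ρ : ℝ) :
    ∃ g : (Fin 2 → ℤ) → ℝ, Summable g ∧ ∀ n x y, ‖y‖ ≤ ρ →
      ‖w (relativePosition τa τb ua ub (M *ᵥ iv n) x y)‖ ≤ g n := by
  set K : ℝ := (1 + (ρ + ‖τa‖ + ‖τb‖ + Ca + Cb)) * √2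
  have hsum : Summable fun n : Fin 2 → ℤ => (1 + ‖M *ᵥ iv n‖) ^ (-s) :=
    summable_one_add_norm_mulVec_rpow_neg hM (by simpa using hs)
  refine ⟨_, hsum.mul_left (K ^ s * C), fun n x y hy => ?_⟩
  have Ca_nonneg : 0 ≤ Ca := (norm_nonneg _).trans (hua 0)
  have Cb_nonneg : 0 ≤ Cb := (norm_nonneg _).trans (hub 0)
  have ρ_nonneg : 0 ≤ ρ := (norm_nonneg _).trans hy
  exact le_mul_rpow_neg_of_rpow_mul_le (by linarith) (Real.sqrt_nonneg _) (by positivity)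
    (by positivity) (abs_nonneg _) (one_add_norm_le_mul_jap3 hua hub _ _ hy)
    (hw _ (mem_slab hL _ x y))

lemma integrableOn_tsum (hM : IsUnit M.det) (hs : 2 < s) (hwmeas : Measurable w)
    (hw : ∀ z ∈ slab L, jap3 z ^ s * |w z| ≤ C) (hL : ∀ x x', |ua x 2 - ub x' 2| ≤ L)
    (huameas : Measurable ua) (hubmeas : Measurable ub)
    (hua : ∀ x, ‖ua x‖ ≤ Ca) (hub : ∀ x, ‖ub x‖ ≤ Cb) (τa τb : Fin 2 → ℝ)
    {S T : Set (Fin 2 → ℝ)} (hS : volume S ≠ ⊤) (hT : Bornology.IsBounded T) :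
    IntegrableOn (fun p : (Fin 2 → ℝ) × (Fin 2 → ℝ) =>
      ∑' n : Fin 2 → ℤ, w (relativePosition τa τb ua ub (M *ᵥ iv n) p.1 p.2)) (S ×ˢ T) := by
  obtain ⟨ρ, hρ⟩ := hT.subset_closedBall 0
  obtain ⟨g, hg, hbound⟩ := exists_summable_bound hM hs hw hL hua hub τa τb ρ
  refine integrableOn_tsum_of_summable_bound ?_ (fun n => ?_) hg fun n => ?_
  · rw [Measure.volume_eq_prod, Measure.prod_prod]
    exact ENNReal.mul_ne_top hS hT.measure_lt_top.ne
  · exact (hwmeas.comp (measurable huameas hubmeas _)).aestronglyMeasurable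
  · refine ae_restrict_of_ae_restrict_of_subset (Set.prod_mono (Set.subset_univ S) hρ)
      (ae_restrict_of_forall_mem
        (MeasurableSet.univ.prod Metric.isClosed_closedBall.measurableSet) ?_)
    rintro ⟨x, y⟩ ⟨-, hy⟩
    exact hbound n x y (mem_closedBall_zero_iff.1 hy)

end relativePosition

/-- The interlayer sum of `PsiPair`, without the normalisation by the area of the unit cell of
layer `a`. -/
def interlayerSum {𝓐a 𝓐b : Type*} [Fintype 𝓐a] [Fintype 𝓐b] (Ab : Matrix (Fin 2) (Fin 2) ℝ)
    (v : 𝓐a → 𝓐b → (Fin 3 → ℝ) → ℝ) (τa : 𝓐a → Fin 2 → ℝ) (τb : 𝓐b → Fin 2 → ℝ)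
    (ua : (Fin 2 → ℝ) → 𝓐a → Fin 3 → ℝ) (ub : (Fin 2 → ℝ) → 𝓐b → Fin 3 → ℝ)
    (x y : Fin 2 → ℝ) : ℝ :=
  ∑ αa, ∑ αb, ∑' n : Fin 2 → ℤ, v αa αb
    (relativePosition (τa αa) (τb αb) (fun x => ua x αa) (fun x => ub x αb) (Ab *ᵥ iv n) x y)

theorem site_potential_L1_general {𝓐a 𝓐b : Type*} [Fintype 𝓐a] [Fintype 𝓐b]
    {Ab : Matrix (Fin 2) (Fin 2) ℝ} (hAb : IsUnit Ab.det) {s : ℝ} (hs : 2 < s)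
    (τa : 𝓐a → Fin 2 → ℝ) (τb : 𝓐b → Fin 2 → ℝ)
    {ua : (Fin 2 → ℝ) → 𝓐a → Fin 3 → ℝ} {ub : (Fin 2 → ℝ) → 𝓐b → Fin 3 → ℝ}
    (huameas : ∀ α, Measurable fun x => ua x α) (hubmeas : ∀ α, Measurable fun x => ub x α)
    {Ca Cb L : ℝ} (hua : ∀ x α, norm3 (ua x α) ≤ Ca) (hub : ∀ x α, norm3 (ub x α) ≤ Cb)
    (hL : ∀ x αa x' αb, |ua x αa 2 - ub x' αb 2| ≤ L)
    {v : 𝓐a → 𝓐b → (Fin 3 → ℝ) → ℝ} (hvmeas : ∀ αa αb, Measurable (v αa αb))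
    (hv : ∀ αa αb, ∃ C : ℝ, ∀ z ∈ slab L, jap3 z ^ s * |v αa αb z| ≤ C)
    {S T : Set (Fin 2 → ℝ)} (hS : volume S ≠ ⊤) (hT : Bornology.IsBounded T) :
    IntegrableOn (fun p : (Fin 2 → ℝ) × (Fin 2 → ℝ) => interlayerSum Ab v τa τb ua ub p.1 p.2)
      (S ×ˢ T) := by
  refine integrable_finsetSum _ fun αa _ => integrable_finsetSum _ fun αb _ => ?_
  obtain ⟨C, hC⟩ := hv αa αb
  exact relativePosition.integrableOn_tsum hAb hs (hvmeas αa αb) hC (fun x x' => hL x αa x' αb)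
    (huameas αa) (hubmeas αb) (fun x => (norm_le_norm3 _).trans (hua x αa))
    (fun x => (norm_le_norm3 _).trans (hub x αb)) (τa αa) (τb αb) hS hT

/-- Lemma: the interlayer site potential is in `L¹(Γ_𝓜 × Γ_{3−j})`. -/
theorem site_potential_L1 (θ q r : ℝ) (hq : 0 < q) (hr : 1 < r)
    (A A1 A2 B1 B2 BM AM : Matrix (Fin 2) (Fin 2) ℝ)
    (hA : IsUnit A.det)
    (hA1 : A1 = (Real.sqrt q)⁻¹ • (Rot (-(θ / 2)) * A))
    (hA2 : A2 = Real.sqrt q • (Rot (θ / 2) * A))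
    (hB1 : B1 = recip A1) (hB2 : B2 = recip A2)
    (hBM : BM = B1 - B2) (hBMinv : IsUnit BM.det)
    (hAM : AM = recip BM)
    (Aa Ab : Matrix (Fin 2) (Fin 2) ℝ)
    (hcase : (Aa = A1 ∧ Ab = A2) ∨ (Aa = A2 ∧ Ab = A1))
    (𝓐a 𝓐b : Type) [Fintype 𝓐a] [Fintype 𝓐b] [Nonempty 𝓐a] [Nonempty 𝓐b]
    (τa : 𝓐a → Fin 2 → ℝ) (τb : 𝓐b → Fin 2 → ℝ)
    (ua : (Fin 2 → ℝ) → 𝓐a → Fin 3 → ℝ) (ub : (Fin 2 → ℝ) → 𝓐b → Fin 3 → ℝ)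
    -- u₁, u₂ ∈ L^∞, measurable and 𝓡_𝓜-periodic
    (huameas : ∀ α, Measurable fun x => ua x α)
    (hubmeas : ∀ α, Measurable fun x => ub x α)
    (hua : ∃ C : ℝ, ∀ x α, norm3 (ua x α) ≤ C)
    (hub : ∃ C : ℝ, ∀ x α, norm3 (ub x α) ≤ C)
    (huaper : ∀ (x : Fin 2 → ℝ), ∀ rM ∈ lat AM, ∀ α, ua (x + rM) α = ua x α)
    (hubper : ∀ (x : Fin 2 → ℝ), ∀ rM ∈ lat AM, ∀ α, ub (x + rM) α = ub x α)
    (v : 𝓐a → 𝓐b → (Fin 3 → ℝ) → ℝ)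
    (hvmeas : ∀ αa αb, Measurable (v αa αb))
    -- v ∈ L^∞_{2r}(ℝ² × [−L_u^z, L_u^z])
    (hv : ∀ αa αb, ∃ C : ℝ, ∀ x ∈ slab
        ((⨆ α1 : 𝓐a, ⨆ α2 : 𝓐b, norm2 (τa α1 - τb α2)) +
          (⨆ x : Fin 2 → ℝ, ⨆ α : 𝓐a, |ua x α 2|) +
          (⨆ x : Fin 2 → ℝ, ⨆ α : 𝓐b, |ub x α 2|)),
      jap3 x ^ (2 * r) * |v αa αb x| ≤ C) :
    IntegrableOn (fun p : (Fin 2 → ℝ) × (Fin 2 → ℝ) => PsiPair Aa Ab v τa τb ua ub p.1 p.2)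
      ((cell AM) ×ˢ (cell Ab)) := by
  obtain ⟨Ca, hCa⟩ := hua
  obtain ⟨Cb, hCb⟩ := hub
  have sqrt_q_ne_zero : √q ≠ 0 := (Real.sqrt_pos.2 hq).ne'
  have hAb : IsUnit Ab.det := by
    rcases hcase with ⟨-, rfl⟩ | ⟨-, rfl⟩
    · exact hA2 ▸ isUnit_det_smul_Rot_mul sqrt_q_ne_zero _ hA
    · exact hA1 ▸ isUnit_det_smul_Rot_mul (inv_ne_zero sqrt_q_ne_zero) _ hA
  have shift_nonneg : 0 ≤ ⨆ α1 : 𝓐a, ⨆ α2 : 𝓐b, norm2 (τa α1 - τb α2) :=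
    Real.iSup_nonneg fun _ => Real.iSup_nonneg fun _ => Real.sqrt_nonneg _
  have height_le := abs_sub_le_iSup_add_iSup
    (fun x α => (norm_le_pi_norm _ 2).trans ((norm_le_norm3 _).trans (hCa x α)))
    (fun x α => (norm_le_pi_norm _ 2).trans ((norm_le_norm3 _).trans (hCb x α)))
  exact (site_potential_L1_general hAb (by linarith) τa τb huameas hubmeas hCa hCb
    (fun x αa x' αb => (height_le x αa x' αb).trans (by linarith)) hvmeas hv
    (isBounded_cell AM).measure_lt_top.ne (isBounded_cell Ab)).const_mul _

end
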